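/- Let |q| < 1, let ρ₁₂, ρ₁₃, ρ₂₃ be reals with 0 < |ρ₁₂|, |ρ₁₃|, |ρ₂₃| < 1 for which the triple series g(x₁,x₂,x₃) = Σ_{k,m,n=0}^∞ (ρ₁₂^k·ρ₁₃^m·ρ₂₃^n/([k]_q!·[m]_q!·[n]_q!))·H_{k+m}(x₁|q)·H_{k+n}(x₂|q)·H_{m+n}(x₃|q) converges absolutely for x₁, x₂, x₃ ∈ S(q). Then g(x₁,x₂,x₃) = ((ρ₁₃²;q)_∞·(ρ₂₃²;q)_∞/∏_{k=0}^∞ (W_k(x₁,x₃,ρ₁₃|q)·W_k(x₃,x₂,ρ₂₃|q))) · Σ_{s=0}^∞ (ρ₁₂^s·(ρ₁₃ρ₂₃/ρ₁₂;q)_s/([s]_q!·(ρ₁₃²;q)_s·(ρ₂₃²;q)_s))·P_s(x₁|x₃,ρ₁₃,q)·P_s(x₂|x₃,ρ₂₃,q). -/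

import Mathlib

noncomputable section

open Finset

/-- The q-integer `[n]_q = 1 + q + ⋯ + q^{n-1}`. -/
def qInt (q : ℝ) (n : ℕ) : ℝ := ∑ i ∈ Finset.range n, q ^ i

/-- The q-factorial `[n]_q!`. -/
def qFact (q : ℝ) (n : ℕ) : ℝ := ∏ j ∈ Finset.range n, qInt q (j + 1)

/-- The q-binomial coefficient. -/
def qBinom (q : ℝ) (n k : ℕ) : ℝ :=
  if k ≤ n then qFact q n / (qFact q (n - k) * qFact q k) else 0

/-- The finite q-Pochhammer symbol `(a;q)_n`. -/
def qPoch (a q : ℝ) (n : ℕ) : ℝ := ∏ j ∈ Finset.range n, (1 - a * q ^ j)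

/-- The infinite q-Pochhammer symbol `(a;q)_∞`. -/
def qPochInf (a q : ℝ) : ℝ := ∏' j : ℕ, (1 - a * q ^ j)

/-- The q-Hermite polynomials `H_n(x|q)`. -/
def qHermite (q : ℝ) : ℕ → ℝ → ℝ
  | 0, _ => 1
  | 1, x => x
  | n + 2, x => x * qHermite q (n + 1) x - qInt q (n + 1) * qHermite q n x

/-- The rescaled q-ultraspherical polynomials `R_n(x|β,q)`. -/
def qUltra (q β : ℝ) : ℕ → ℝ → ℝ
  | 0, _ => 1
  | 1, x => (1 - β) * x
  | n + 2, x => (1 - β * q ^ (n + 1)) * x * qUltra q β (n + 1) x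
      - (1 - β ^ 2 * q ^ n) * qInt q (n + 1) * qUltra q β n x

/-- The Al-Salam–Chihara polynomials `P_n(x|y,ρ,q)`. -/
def ASC (q y ρ : ℝ) : ℕ → ℝ → ℝ
  | 0, _ => 1
  | 1, x => x - ρ * y
  | n + 2, x => (x - ρ * y * q ^ (n + 1)) * ASC q y ρ (n + 1) x
      - (1 - ρ ^ 2 * q ^ n) * qInt q (n + 1) * ASC q y ρ n x

/-- The polynomials `B_n(y|q)` (q⁻¹-Hermite related). -/
def qB (q : ℝ) : ℕ → ℝ → ℝ
  | 0, _ => 1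
  | 1, y => -y
  | n + 2, y => -q ^ (n + 1) * y * qB q (n + 1) y + q ^ n * qInt q (n + 1) * qB q n y

/-- The big q-Hermite polynomials `H_n(x|a,q)`. -/
def bigqHermite (q a : ℝ) : ℕ → ℝ → ℝ
  | 0, _ => 1
  | 1, x => x - a
  | n + 2, x => (x - a * q ^ (n + 1)) * bigqHermite q a (n + 1) x
      - qInt q (n + 1) * bigqHermite q a n x

/-- The probabilistic Hermite polynomials `H_n(x)`. -/
def probHermite : ℕ → ℝ → ℝ
  | 0, _ => 1
  | 1, x => x
  | n + 2, x => x * probHermite (n + 1) x - (n + 1) * probHermite n x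

/-- The probabilistic Hermite polynomials on ℂ. -/
def probHermiteC : ℕ → ℂ → ℂ
  | 0, _ => 1
  | 1, x => x
  | n + 2, x => x * probHermiteC (n + 1) x - (n + 1) * probHermiteC n x

/-- The Chebyshev polynomials of the second kind. -/
def chebU : ℕ → ℝ → ℝ
  | 0, _ => 1
  | 1, x => 2 * x
  | n + 2, x => 2 * x * chebU (n + 1) x - chebU n x

/-- The Chebyshev polynomials of the first kind. -/
def chebT : ℕ → ℝ → ℝ
  | 0, _ => 1
  | 1, x => x
  | n + 2, x => 2 * x * chebT (n + 1) x - chebT n x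

/-- `W_k(x,y,t|q)`. -/
def Wk (q x y t : ℝ) (k : ℕ) : ℝ :=
  (1 - t ^ 2 * q ^ (2 * k)) ^ 2 - (1 - q) * x * y * t * q ^ k * (1 + t ^ 2 * q ^ (2 * k))
    + (1 - q) * t ^ 2 * q ^ (2 * k) * (x ^ 2 + y ^ 2)

/-- `V_k(x,a|q)`. -/
def Vk (q x a : ℝ) (k : ℕ) : ℝ :=
  1 - (1 - q) * a * x * q ^ k + (1 - q) * a ^ 2 * q ^ (2 * k)

/-- `L_k(x,a|q)`. -/
def Lk (q x a : ℝ) (k : ℕ) : ℝ :=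
  (1 + a * q ^ k) ^ 2 - (1 - q) * x ^ 2 * a ^ 2 * q ^ k

/-- The support interval `S(q) = [-2/√(1-q), 2/√(1-q)]` for `|q| < 1`. -/
def Sq (q : ℝ) : Set ℝ := Set.Icc (-(2 / Real.sqrt (1 - q))) (2 / Real.sqrt (1 - q))

/-- The general term of the triple (Kibble–Slepian type) series. -/
def tripleTerm (q ρ₁₂ ρ₁₃ ρ₂₃ x₁ x₂ x₃ : ℝ) (p : ℕ × ℕ × ℕ) : ℝ :=
  ρ₁₂ ^ p.1 * ρ₁₃ ^ p.2.1 * ρ₂₃ ^ p.2.2 /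
      (qFact q p.1 * qFact q p.2.1 * qFact q p.2.2) *
    qHermite q (p.1 + p.2.1) x₁ * qHermite q (p.1 + p.2.2) x₂ *
    qHermite q (p.2.1 + p.2.2) x₃

open Filter Topology

/-! ### q-integers and q-factorials -/

lemma qInt_zero (q : ℝ) : qInt q 0 = 0 := by simp [qInt]

lemma qInt_one (q : ℝ) : qInt q 1 = 1 := by simp [qInt]

lemma qInt_succ (q : ℝ) (n : ℕ) : qInt q (n + 1) = 1 + q * qInt q n := by
  rw [qInt, geom_sum_succ, add_comm]; rfl

lemma one_sub_mul_qInt (q : ℝ) (n : ℕ) : (1 - q) * qInt q n = 1 - q ^ n :=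
  mul_neg_geom_sum q n

lemma qInt_add (q : ℝ) (m n : ℕ) : qInt q (m + n) = qInt q m + q ^ m * qInt q n := by
  simp only [qInt, Finset.sum_range_add, pow_add, Finset.mul_sum]

lemma qInt_succ_pos {q : ℝ} (hq : |q| < 1) (n : ℕ) : 0 < qInt q (n + 1) := by
  have h1 : 0 < 1 - q := by linarith [(abs_lt.mp hq).2]
  have h2 : q ^ (n + 1) < 1 :=
    (le_abs_self _).trans_lt (by rw [abs_pow]; exact pow_lt_one₀ (abs_nonneg q) hq n.succ_ne_zero)
  have h3 := one_sub_mul_qInt q (n + 1)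
  exact pos_of_mul_pos_right (by rw [h3]; linarith) h1.le

lemma qFact_zero (q : ℝ) : qFact q 0 = 1 := by simp [qFact]

lemma qFact_succ (q : ℝ) (n : ℕ) : qFact q (n + 1) = qFact q n * qInt q (n + 1) := by
  simp [qFact, Finset.prod_range_succ]

lemma qFact_pos {q : ℝ} (hq : |q| < 1) (n : ℕ) : 0 < qFact q n :=
  Finset.prod_pos fun j _ => qInt_succ_pos hq j

lemma qPoch_succ (a q : ℝ) (n : ℕ) : qPoch a q (n + 1) = qPoch a q n * (1 - a * q ^ n) := by
  simp [qPoch, Finset.prod_range_succ]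

lemma one_sub_mul_pow_ne_zero {a q : ℝ} (ha : |a| < 1) (hq : |q| < 1) (j : ℕ) :
    1 - a * q ^ j ≠ 0 := by
  have h : |a * q ^ j| < 1 := by
    rw [abs_mul, abs_pow]
    exact (mul_le_of_le_one_right (abs_nonneg a)
      (pow_le_one₀ (abs_nonneg q) hq.le)).trans_lt ha
  linarith [(abs_lt.mp h).2]

lemma qPoch_ne_zero {a q : ℝ} (ha : |a| < 1) (hq : |q| < 1) (n : ℕ) : qPoch a q n ≠ 0 :=
  Finset.prod_ne_zero_iff.mpr fun j _ => one_sub_mul_pow_ne_zero ha hq j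

lemma summable_norm_mul_pow {q : ℝ} (hq : |q| < 1) (a : ℝ) :
    Summable fun j : ℕ => ‖-(a * q ^ j)‖ := by
  simpa [norm_mul, norm_pow] using
    (summable_geometric_of_lt_one (abs_nonneg q) hq).mul_left |a|

lemma multipliable_qPochInf {q : ℝ} (hq : |q| < 1) (a : ℝ) :
    Multipliable fun j : ℕ => 1 - a * q ^ j := by
  simpa [sub_eq_add_neg] using multipliable_one_add_of_summable (summable_norm_mul_pow hq a)

lemma qPochInf_ne_zero {a q : ℝ} (ha : |a| < 1) (hq : |q| < 1) : qPochInf a q ≠ 0 := by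
  have := tprod_one_add_ne_zero_of_summable (f := fun j : ℕ => -(a * q ^ j))
    (fun j => by simpa [sub_eq_add_neg] using one_sub_mul_pow_ne_zero ha hq j)
    (summable_norm_mul_pow hq a)
  simpa [qPochInf, sub_eq_add_neg] using this

lemma multipliable_Wk {q : ℝ} (hq : |q| < 1) (x y t : ℝ) : Multipliable (Wk q x y t) := by
  have hs := summable_geometric_of_lt_one (abs_nonneg q) hq
  set B : ℝ := |(1 - q) * x * y * t| * (1 + t ^ 2) + (2 * t ^ 2 + t ^ 4)
    + |(1 - q) * t ^ 2 * (x ^ 2 + y ^ 2)|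
  have key : Summable fun k : ℕ => ‖Wk q x y t k - 1‖ := by
    refine Summable.of_nonneg_of_le (fun _ => norm_nonneg _) (fun k => ?_) (hs.mul_left B)
    set p := q ^ k with hp
    have hp1 : |p| ≤ 1 := by rw [hp, abs_pow]; exact pow_le_one₀ (abs_nonneg q) hq.le
    have hp2 : |p| ^ 2 ≤ |p| := by nlinarith [abs_nonneg p]
    have hp4 : |p| ^ 4 ≤ |p| := by nlinarith [abs_nonneg p, sq_nonneg (|p|)]
    have hp3 : |p| ^ 3 ≤ |p| := by nlinarith [abs_nonneg p, sq_nonneg (|p|)]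
    have e : Wk q x y t k - 1 = (-((1 - q) * x * y * t)) * p
        + (-((1 - q) * x * y * t)) * t ^ 2 * p ^ 3
        + (-2 * t ^ 2) * p ^ 2 + t ^ 4 * p ^ 4 + ((1 - q) * t ^ 2 * (x ^ 2 + y ^ 2)) * p ^ 2 := by
      rw [Wk, pow_mul', ← hp]; ring
    rw [e, Real.norm_eq_abs, ← abs_pow]
    calc _ ≤ |(-((1 - q) * x * y * t)) * p| + |(-((1 - q) * x * y * t)) * t ^ 2 * p ^ 3|
        + |(-2 * t ^ 2) * p ^ 2| + |t ^ 4 * p ^ 4|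
        + |((1 - q) * t ^ 2 * (x ^ 2 + y ^ 2)) * p ^ 2| := by
          refine (abs_add_le _ _).trans (add_le_add_left ?_ _)
          refine (abs_add_le _ _).trans (add_le_add_left ?_ _)
          refine (abs_add_le _ _).trans (add_le_add_left ?_ _)
          exact abs_add_le _ _
      _ = |(1 - q) * x * y * t| * |p| + |(1 - q) * x * y * t| * t ^ 2 * |p| ^ 3
        + 2 * t ^ 2 * |p| ^ 2 + t ^ 4 * |p| ^ 4
        + |(1 - q) * t ^ 2 * (x ^ 2 + y ^ 2)| * |p| ^ 2 := by
          rw [abs_mul _ p, abs_mul _ (p ^ 3), abs_mul _ (p ^ 2), abs_mul _ (p ^ 4),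
            abs_mul _ (p ^ 2), abs_mul _ (t ^ 2), abs_neg, abs_pow p, abs_pow p, abs_pow p,
            abs_of_nonneg (sq_nonneg t), abs_of_nonneg (by positivity : 0 ≤ t ^ 4),
            show |-2 * t ^ 2| = 2 * t ^ 2 by
              rw [abs_mul, abs_of_nonneg (sq_nonneg t)]; norm_num]
      _ ≤ |(1 - q) * x * y * t| * |p| + |(1 - q) * x * y * t| * t ^ 2 * |p|
        + 2 * t ^ 2 * |p| + t ^ 4 * |p|
        + |(1 - q) * t ^ 2 * (x ^ 2 + y ^ 2)| * |p| := by gcongr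
      _ = B * |p| := by ring
  simpa using multipliable_one_add_of_summable key

/-! ### Normalised q-Hermite polynomials and algebraic identities -/

/-- The q-Hermite polynomial divided by the q-factorial. -/
def normHermite (q x : ℝ) (n : ℕ) : ℝ := qHermite q n x / qFact q n

lemma normHermite_zero (q x : ℝ) : normHermite q x 0 = 1 := by
  simp [normHermite, qHermite, qFact_zero]

lemma qInt_mul_normHermite_one (q x : ℝ) :
    qInt q 1 * normHermite q x 1 = x * normHermite q x 0 := by
  simp [normHermite, qHermite, qFact, qInt_one]

lemma qInt_mul_normHermite {q : ℝ} (hq : |q| < 1) (x : ℝ) (n : ℕ) :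
    qInt q (n + 2) * normHermite q x (n + 2)
      = x * normHermite q x (n + 1) - normHermite q x n := by
  have h1 := (qInt_succ_pos hq n).ne'
  have h2 := (qInt_succ_pos hq (n + 1)).ne'
  have h3 := (qFact_pos hq n).ne'
  simp only [normHermite, qHermite, qFact_succ]
  field_simp

/-- The coefficients `(-1)^j q^{j(j-1)/2} / [j]_q!`. -/
def invCoeff (q : ℝ) (j : ℕ) : ℝ := (-1) ^ j * q ^ (j.choose 2) / qFact q j

lemma invCoeff_zero (q : ℝ) : invCoeff q 0 = 1 := by simp [invCoeff, qFact_zero]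

lemma invCoeff_succ_mul {q : ℝ} (hq : |q| < 1) (j : ℕ) :
    invCoeff q (j + 1) * qInt q (j + 1) = -(q ^ j * invCoeff q j) := by
  have h1 := (qInt_succ_pos hq j).ne'
  have h3 := (qFact_pos hq j).ne'
  have h : (j + 1).choose 2 = j + j.choose 2 := by
    rw [Nat.choose_succ_succ' j 1, Nat.choose_one_right]
  rw [invCoeff, invCoeff, qFact_succ, h, pow_add, pow_succ]
  field_simp
  ring

/-- `H_{m-j}(x|q) / [m-j]_q!`, understood as zero when `m < j`. -/
def shiftHermite (q x : ℝ) (m j : ℕ) : ℝ := if j ≤ m then normHermite q x (m - j) else 0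

lemma shiftHermite_succ_succ (q x : ℝ) (m j : ℕ) :
    shiftHermite q x (m + 1) (j + 1) = shiftHermite q x m j := by
  simp [shiftHermite]

lemma shiftHermite_zero_right (q x : ℝ) (m : ℕ) : shiftHermite q x m 0 = normHermite q x m := by
  simp [shiftHermite]

lemma shiftHermite_of_lt (q x : ℝ) {m j : ℕ} (h : m < j) : shiftHermite q x m j = 0 := by
  simp [shiftHermite, h]

lemma shiftHermite_add (q x : ℝ) (m j : ℕ) :
    shiftHermite q x (m + j) j = normHermite q x m := by
  simp [shiftHermite]

lemma qInt_mul_shiftHermite {q : ℝ} (hq : |q| < 1) (x : ℝ) (m j : ℕ) :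
    qInt q (m + 1) * shiftHermite q x (m + 1) j = qInt q j * shiftHermite q x (m + 1) j
      + q ^ j * (x * shiftHermite q x m j - shiftHermite q x m (j + 1)) := by
  rcases lt_trichotomy j (m + 1) with h | rfl | h
  · obtain ⟨d, rfl⟩ := Nat.exists_eq_add_of_le (Nat.lt_succ_iff.mp h)
    have e1 : shiftHermite q x (j + d + 1) j = normHermite q x (d + 1) := by
      rw [show j + d + 1 = (d + 1) + j by ring, shiftHermite_add]
    have e2 : shiftHermite q x (j + d) j = normHermite q x d := by
      rw [add_comm, shiftHermite_add]
    have e3 : qInt q (d + 1) * normHermite q x (d + 1)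
        = x * normHermite q x d - shiftHermite q x (j + d) (j + 1) := by
      rcases d with _ | d
      · rw [zero_add, qInt_mul_normHermite_one, shiftHermite_of_lt _ _ (by simp), sub_zero]
      · rw [qInt_mul_normHermite hq, show j + (d + 1) = d + (j + 1) by ring, shiftHermite_add]
    rw [e1, e2, add_assoc, qInt_add]
    linear_combination q ^ j * e3
  · rw [shiftHermite_of_lt q x (Nat.lt_succ_self m),
      shiftHermite_of_lt q x (show m < m + 1 + 1 by omega)]
    ring
  · rw [shiftHermite_of_lt q x h, shiftHermite_of_lt q x (show m < j by omega),
      shiftHermite_of_lt q x (show m < j + 1 by omega)]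
    ring

/-- The sum expressing `H_{m+n}` through products of lower q-Hermite polynomials. -/
def delinSum (q x : ℝ) (N m n : ℕ) : ℝ :=
  ∑ j ∈ range N, invCoeff q j * shiftHermite q x m j * shiftHermite q x n j

lemma delinSum_comm (q x : ℝ) (N m n : ℕ) : delinSum q x N m n = delinSum q x N n m :=
  Finset.sum_congr rfl fun _ _ => by ring

lemma qInt_mul_delinSum {q : ℝ} (hq : |q| < 1) (x : ℝ) {N m n : ℕ} (hn : n < N) :
    qInt q (m + 1) * delinSum q x (N + 1) (m + 1) n =
      ∑ j ∈ range N, invCoeff q j * q ^ j *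
        (x * shiftHermite q x m j * shiftHermite q x n j
          - shiftHermite q x m (j + 1) * shiftHermite q x n j
          - shiftHermite q x m j * shiftHermite q x n (j + 1)) := by
  have h1 : qInt q (m + 1) * delinSum q x (N + 1) (m + 1) n =
      (∑ j ∈ range (N + 1), invCoeff q j * qInt q j * shiftHermite q x (m + 1) j
        * shiftHermite q x n j)
      + ∑ j ∈ range (N + 1), invCoeff q j * q ^ j *
        (x * shiftHermite q x m j - shiftHermite q x m (j + 1)) * shiftHermite q x n j := by
    rw [delinSum, Finset.mul_sum, ← Finset.sum_add_distrib]
    refine Finset.sum_congr rfl fun j _ => ?_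
    linear_combination invCoeff q j * shiftHermite q x n j * qInt_mul_shiftHermite hq x m j
  rw [h1, Finset.sum_range_succ', Finset.sum_range_succ, shiftHermite_of_lt q x hn, qInt_zero]
  simp only [mul_zero, zero_mul, add_zero]
  rw [← Finset.sum_add_distrib]
  refine Finset.sum_congr rfl fun j _ => ?_
  rw [shiftHermite_succ_succ, invCoeff_succ_mul hq]
  ring

/-- Inverse linearisation formula: `H_{m+n}` as a combination of the products
`H_{m-j} H_{n-j}`. -/
lemma qHermite_add {q : ℝ} (hq : |q| < 1) (x : ℝ) {N m n : ℕ} (hN : m + n < N) :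
    qHermite q (m + n) x = qFact q m * qFact q n * delinSum q x (N + 1) m n := by
  induction n generalizing m with
  | zero =>
    have h0 : ∀ j ∈ range N, invCoeff q (j + 1) * shiftHermite q x m (j + 1)
        * shiftHermite q x 0 (j + 1) = 0 := fun j _ => by
      rw [shiftHermite_of_lt q x (Nat.succ_pos j), mul_zero]
    have := (qFact_pos hq m).ne'
    rw [delinSum, Finset.sum_range_succ', Finset.sum_eq_zero h0, invCoeff_zero,
      shiftHermite_zero_right, shiftHermite_zero_right, normHermite_zero, qFact_zero, normHermite]
    simp only [add_zero]
    field_simp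
    ring
  | succ n ih =>
    have h1 := qInt_mul_delinSum hq x (N := N) (m := m) (n := n) (by omega)
    have h2 := qInt_mul_delinSum hq x (N := N) (m := n) (n := m) (by omega)
    have h3 : qInt q (m + 1) * delinSum q x (N + 1) (m + 1) n
        = qInt q (n + 1) * delinSum q x (N + 1) (n + 1) m := by
      rw [h1, h2]
      exact Finset.sum_congr rfl fun j _ => by ring
    rw [show m + (n + 1) = m + 1 + n by ring, ih (by omega), qFact_succ, qFact_succ,
      delinSum_comm q x (N + 1) m]
    linear_combination qFact q m * qFact q n * h3

/-- A form of the q-binomial theorem. -/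
lemma sum_antidiagonal_invCoeff {q : ℝ} (hq : |q| < 1) (a c : ℝ) (s : ℕ) :
    qFact q s * ∑ p ∈ antidiagonal s, a ^ p.1 / qFact q p.1 * (invCoeff q p.2 * c ^ p.2)
      = ∏ i ∈ range s, (a - c * q ^ i) := by
  induction s with
  | zero => simp [qFact_zero, invCoeff_zero]
  | succ s ih =>
    set f : ℕ × ℕ → ℝ := fun p => a ^ p.1 / qFact q p.1 * (invCoeff q p.2 * c ^ p.2) with hf
    have key : qInt q (s + 1) * ∑ p ∈ antidiagonal (s + 1), f p
        = (a - c * q ^ s) * ∑ p ∈ antidiagonal s, f p := by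
      have h1 : qInt q (s + 1) * ∑ p ∈ antidiagonal (s + 1), f p
          = ∑ p ∈ antidiagonal (s + 1), qInt q p.1 * f p
            + ∑ p ∈ antidiagonal (s + 1), q ^ p.1 * qInt q p.2 * f p := by
        rw [Finset.mul_sum, ← Finset.sum_add_distrib]
        refine Finset.sum_congr rfl fun p hp => ?_
        rw [← mem_antidiagonal.mp hp, qInt_add]
        ring
      rw [h1, Finset.Nat.sum_antidiagonal_succ, Finset.Nat.sum_antidiagonal_succ', qInt_zero]
      simp only [zero_mul, mul_zero, zero_add]
      rw [Finset.mul_sum, ← Finset.sum_add_distrib]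
      refine Finset.sum_congr rfl fun p hp => ?_
      have e1 := (qInt_succ_pos hq p.1).ne'
      have e2 := (qFact_pos hq p.1).ne'
      have e3 : qInt q (p.1 + 1) * f (p.1 + 1, p.2) = a * f p := by
        simp only [hf, qFact_succ]; field_simp; ring
      rw [e3, ← mem_antidiagonal.mp hp, pow_add]
      simp only [hf]
      linear_combination q ^ p.1 * a ^ p.1 / qFact q p.1 * c ^ (p.2 + 1)
        * invCoeff_succ_mul hq p.2
    rw [qFact_succ, mul_assoc, key, Finset.prod_range_succ, ← ih]
    ring

/-! ### Growth bounds -/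

lemma exists_le_mul_pow_of_ratio {u a : ℕ → ℝ} {L K : ℝ} (hu : ∀ n, 0 ≤ u n)
    (hua : ∀ n, u (n + 1) ≤ a n * u n) (ha : Tendsto a atTop (𝓝 L)) (hLK : L < K) (hK : 0 < K) :
    ∃ C, 0 < C ∧ ∀ n, u n ≤ C * K ^ n := by
  obtain ⟨N, hN⟩ := eventually_atTop.mp (ha.eventually_lt_const hLK)
  have hnn : ∀ i ∈ range (N + 1), 0 ≤ u i / K ^ i := fun i _ => div_nonneg (hu i) (by positivity)
  refine ⟨1 + ∑ i ∈ range (N + 1), u i / K ^ i, by linarith [Finset.sum_nonneg hnn], fun n => ?_⟩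
  have small : ∀ n ≤ N, u n ≤ (1 + ∑ i ∈ range (N + 1), u i / K ^ i) * K ^ n := fun n hn => by
    have := Finset.single_le_sum hnn (mem_range.mpr (Nat.lt_succ_of_le hn))
    exact (div_le_iff₀ (by positivity)).mp (this.trans (by linarith))
  induction n with
  | zero => exact small 0 (Nat.zero_le N)
  | succ n ih =>
    rcases le_or_gt (n + 1) N with h | h
    · exact small _ h
    · calc u (n + 1) ≤ a n * u n := hua n
        _ ≤ K * u n := mul_le_mul_of_nonneg_right (hN n (by omega)).le (hu n)
        _ ≤ K * _ := mul_le_mul_of_nonneg_left ih hK.le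
        _ = _ := by ring

lemma exists_inv_qFact_le {q K : ℝ} (hq : |q| < 1) (hK : 1 < K) :
    ∃ C, 0 < C ∧ ∀ n, (qFact q n)⁻¹ ≤ C * (K * (1 - q)) ^ n := by
  have h1 : 0 < 1 - q := by linarith [(abs_lt.mp hq).2]
  refine exists_le_mul_pow_of_ratio (a := fun n => (qInt q (n + 1))⁻¹) (L := 1 - q)
    (fun n => (inv_pos.mpr (qFact_pos hq n)).le) (fun n => ?_) ?_ (by nlinarith) (by positivity)
  · rw [qFact_succ, mul_inv, mul_comm]
  · have : ∀ n, (qInt q (n + 1))⁻¹ = (1 - q) / (1 - q ^ (n + 1)) := fun n => by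
      rw [← one_sub_mul_qInt]
      have := (qInt_succ_pos hq n).ne'
      field_simp
    simp only [this]
    have h2 : Tendsto (fun n : ℕ => q ^ (n + 1)) atTop (𝓝 0) :=
      (tendsto_add_atTop_iff_nat 1).mpr (tendsto_pow_atTop_nhds_zero_of_abs_lt_one hq)
    have h3 : Tendsto (fun n : ℕ => (1 - q) / (1 - q ^ (n + 1))) atTop (𝓝 ((1 - q) / (1 - 0))) :=
      tendsto_const_nhds.div (tendsto_const_nhds.sub h2) (by norm_num)
    simpa using h3

lemma exists_unimodular {c : ℝ} (hc : |c| ≤ 1) :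
    ∃ z w : ℂ, ‖z‖ = 1 ∧ ‖w‖ = 1 ∧ z + w = 2 * c ∧ z * w = 1 := by
  have h1 : Complex.cos (Real.arccos c : ℝ) = c := by
    rw [← Complex.ofReal_cos, Real.cos_arccos (abs_le.mp hc).1 (abs_le.mp hc).2]
  refine ⟨Complex.exp ((Real.arccos c : ℝ) * Complex.I),
    Complex.exp (-(Real.arccos c : ℝ) * Complex.I), Complex.norm_exp_ofReal_mul_I _, ?_, ?_, ?_⟩
  · rw [← Complex.ofReal_neg]; exact Complex.norm_exp_ofReal_mul_I _
  · rw [← Complex.two_cos, h1]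
  · rw [← Complex.exp_add]; simp

lemma exists_abs_qHermite_le {q K x : ℝ} (hq : |q| < 1) (hK : 1 < K) (hx : x ∈ Sq q) :
    ∃ C, 0 < C ∧ ∀ n, |qHermite q n x| ≤ C * (K / √(1 - q)) ^ n := by
  have h1 : 0 < 1 - q := by linarith [(abs_lt.mp hq).2]
  set s := √(1 - q) with hs
  have hs0 : 0 < s := Real.sqrt_pos.mpr h1
  have hss : s ^ 2 = 1 - q := Real.sq_sqrt h1.le
  have hc : |s * x / 2| ≤ 1 := by
    have hx' : |x| ≤ 2 / s := abs_le.mpr hx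
    rw [abs_div, abs_mul, abs_of_pos hs0, abs_two, div_le_one two_pos]
    calc s * |x| ≤ s * (2 / s) := by gcongr
      _ = 2 := by field_simp
  obtain ⟨z, w, hz, hw, hzw, hzw1⟩ := exists_unimodular hc
  set h : ℕ → ℂ := fun n => ((s ^ n * qHermite q n x : ℝ) : ℂ) with hh
  have hrec : ∀ n, h (n + 2) - z * h (n + 1)
      = w * (h (n + 1) - z * h n) + (q : ℂ) ^ (n + 1) * h n := fun n => by
    have e1 : s ^ (n + 2) * qHermite q (n + 2) x
        = 2 * (s * x / 2) * (s ^ (n + 1) * qHermite q (n + 1) x)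
          - (1 - q ^ (n + 1)) * (s ^ n * qHermite q n x) := by
      rw [← one_sub_mul_qInt, ← hss, qHermite]
      ring
    have e2 : h (n + 2) = 2 * ((s * x / 2 : ℝ) : ℂ) * h (n + 1) - (1 - (q : ℂ) ^ (n + 1)) * h n := by
      simp only [hh]; exact_mod_cast congrArg (fun r : ℝ => (r : ℂ)) e1
    linear_combination e2 - h (n + 1) * hzw + h n * hzw1
  set δ := (K - 1) / 2 with hδ
  have hδ0 : 0 < δ := by rw [hδ]; linarith
  have step : ∀ n, δ * ‖h (n + 1)‖ + ‖h (n + 1 + 1) - z * h (n + 1)‖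
      ≤ (1 + δ + |q| ^ (n + 1) / δ) * (δ * ‖h n‖ + ‖h (n + 1) - z * h n‖) := fun n => by
    have i1 : ‖h (n + 1)‖ ≤ ‖h n‖ + ‖h (n + 1) - z * h n‖ := by
      calc ‖h (n + 1)‖ = ‖z * h n + (h (n + 1) - z * h n)‖ := by ring_nf
        _ ≤ _ := norm_add_le _ _
        _ = _ := by rw [norm_mul, hz, one_mul]
    have i2 : ‖h (n + 1 + 1) - z * h (n + 1)‖
        ≤ ‖h (n + 1) - z * h n‖ + |q| ^ (n + 1) * ‖h n‖ := by
      rw [hrec n]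
      refine (norm_add_le _ _).trans_eq ?_
      rw [norm_mul, hw, one_mul, norm_mul, norm_pow, Complex.norm_real, Real.norm_eq_abs]
    set A := ‖h n‖
    set d := ‖h (n + 1) - z * h n‖
    have hd : 0 ≤ d := norm_nonneg _
    have hA : 0 ≤ A := norm_nonneg _
    have hr : 0 ≤ |q| ^ (n + 1) / δ := by positivity
    have hr2 : |q| ^ (n + 1) = |q| ^ (n + 1) / δ * δ := by field_simp
    have := mul_le_mul_of_nonneg_left i1 hδ0.le
    calc _ ≤ δ * (A + d) + (d + |q| ^ (n + 1) / δ * δ * A) := by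
          rw [← hr2]; exact add_le_add this i2
      _ ≤ (1 + δ + |q| ^ (n + 1) / δ) * (δ * A + d) := by
          nlinarith [mul_nonneg hr hd, mul_nonneg (mul_nonneg hδ0.le hδ0.le) hA]
  have lim : Tendsto (fun n : ℕ => 1 + δ + |q| ^ (n + 1) / δ) atTop (𝓝 (1 + δ + 0 / δ)) := by
    have h2 : Tendsto (fun n : ℕ => |q| ^ (n + 1)) atTop (𝓝 0) :=
      (tendsto_add_atTop_iff_nat 1).mpr
        (tendsto_pow_atTop_nhds_zero_of_abs_lt_one (by rwa [abs_abs]))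
    exact tendsto_const_nhds.add (h2.div_const δ)
  obtain ⟨C, hC, hb⟩ := exists_le_mul_pow_of_ratio (K := K)
    (u := fun n => δ * ‖h n‖ + ‖h (n + 1) - z * h n‖) (fun n => by positivity) step lim
    (by rw [zero_div, hδ]; linarith) (by linarith)
  refine ⟨C / δ, by positivity, fun n => ?_⟩
  have e : ‖h n‖ = s ^ n * |qHermite q n x| := by
    rw [hh, Complex.norm_real, Real.norm_eq_abs, abs_mul, abs_of_pos (by positivity)]
  have e2 : δ * (s ^ n * |qHermite q n x|) ≤ C * K ^ n := by
    rw [← e]; linarith [hb n, norm_nonneg (h (n + 1) - z * h n)]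
  rw [div_pow, div_mul_div_comm, le_div_iff₀ (by positivity)]
  linarith

lemma exists_abs_normHermite_le {q K x : ℝ} (hq : |q| < 1) (hK : 1 < K) (hx : x ∈ Sq q) :
    ∃ C, 0 < C ∧ ∀ n, |normHermite q x n| ≤ C * (K ^ 2 * √(1 - q)) ^ n := by
  have h1 : 0 < 1 - q := by linarith [(abs_lt.mp hq).2]
  obtain ⟨C, hC, hb⟩ := exists_abs_qHermite_le hq hK hx
  obtain ⟨D, hD, hb'⟩ := exists_inv_qFact_le hq hK
  refine ⟨C * D, by positivity, fun n => ?_⟩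
  have hs0 : 0 < √(1 - q) := Real.sqrt_pos.mpr h1
  have hss : √(1 - q) ^ 2 = 1 - q := Real.sq_sqrt h1.le
  have e : K ^ 2 * √(1 - q) = K / √(1 - q) * (K * (1 - q)) := by
    field_simp
    linarith
  rw [normHermite, div_eq_mul_inv, abs_mul, abs_of_pos (inv_pos.mpr (qFact_pos hq n)), e, mul_pow]
  calc _ ≤ (C * (K / √(1 - q)) ^ n) * (D * (K * (1 - q)) ^ n) :=
        mul_le_mul (hb n) (hb' n) (inv_pos.mpr (qFact_pos hq n)).le (by positivity)
    _ = _ := by ring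

lemma exists_one_lt_mul_cube_lt {r : ℝ} (hr : r < 1) : ∃ K : ℝ, 1 < K ∧ r * K ^ 3 < 1 := by
  have h : Tendsto (fun K : ℝ => r * K ^ 3) (𝓝[>] 1) (𝓝 (r * 1 ^ 3)) :=
    ((continuous_const.mul (continuous_pow 3)).tendsto 1).mono_left nhdsWithin_le_nhds
  obtain ⟨K, h1, h2⟩ := ((h.eventually_lt_const (by simpa using hr)).and
    self_mem_nhdsWithin).exists
  exact ⟨K, h2, h1⟩

/-! ### The Poisson–Mehler formula and its shifted versions -/

/-- The general term of the series for the shifted Poisson–Mehler kernel. -/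
def mehlerTerm (q x y t : ℝ) (s m : ℕ) : ℝ := t ^ m * qHermite q (m + s) x * normHermite q y m

/-- The shifted Poisson–Mehler kernel `∑ t^m H_{m+s}(x) H_m(y) / [m]_q!`. -/
def mehlerSum (q x y t : ℝ) (s : ℕ) : ℝ := ∑' m, mehlerTerm q x y t s m

lemma summable_abs_mehlerTerm {q x y t : ℝ} (hq : |q| < 1) (hx : x ∈ Sq q) (hy : y ∈ Sq q)
    (ht : |t| < 1) (s : ℕ) : Summable fun m => |mehlerTerm q x y t s m| := by
  have h1 : 0 < 1 - q := by linarith [(abs_lt.mp hq).2]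
  obtain ⟨K, hK, hK3⟩ := exists_one_lt_mul_cube_lt ht
  obtain ⟨C, hC, hb⟩ := exists_abs_qHermite_le hq hK hx
  obtain ⟨D, hD, hb'⟩ := exists_abs_normHermite_le hq hK hy
  have hs0 : 0 < √(1 - q) := Real.sqrt_pos.mpr h1
  refine Summable.of_nonneg_of_le (fun _ => abs_nonneg _) (fun m => ?_)
    ((summable_geometric_of_lt_one (by positivity) hK3).mul_left (C * D * (K / √(1 - q)) ^ s))
  rw [mehlerTerm, abs_mul, abs_mul, abs_pow]
  calc _ ≤ |t| ^ m * (C * (K / √(1 - q)) ^ (m + s)) * (D * (K ^ 2 * √(1 - q)) ^ m) := by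
        gcongr
        · exact hb _
        · exact hb' _
    _ = C * D * (K / √(1 - q)) ^ s * (|t| * (K / √(1 - q) * (K ^ 2 * √(1 - q)))) ^ m := by
        rw [mul_pow, mul_pow, pow_add]; ring
    _ = _ := by
        congr 3
        field_simp

lemma hasSum_mehlerSum {q x y t : ℝ} (hq : |q| < 1) (hx : x ∈ Sq q) (hy : y ∈ Sq q)
    (ht : |t| < 1) (s : ℕ) : HasSum (mehlerTerm q x y t s) (mehlerSum q x y t s) :=
  (summable_abs_mehlerTerm hq hx hy ht s).of_abs.hasSum

lemma hasSum_mehler_aux {q x y t : ℝ} (hq : |q| < 1) (hx : x ∈ Sq q) (hy : y ∈ Sq q)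
    (ht : |t| < 1) (s : ℕ) :
    HasSum (fun m => t ^ (m + 1) * qHermite q (m + s) x
        * (qInt q (m + 1) * normHermite q y (m + 1)))
      (t * (y * mehlerSum q x y t s - t * mehlerSum q x y t (s + 1))) := by
  have hA := hasSum_mehlerSum hq hx hy ht s
  have hB := hasSum_mehlerSum hq hx hy ht (s + 1)
  set g : ℕ → ℝ := fun m => t ^ m * qHermite q (m + s) x
    * (qInt q (m + 1) * normHermite q y (m + 1) - y * normHermite q y m) with hg
  have h1 : HasSum g (-(t * mehlerSum q x y t (s + 1))) := by
    have := (hasSum_nat_add_iff (f := g) (g := -(t * mehlerSum q x y t (s + 1))) 1).mp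
      ((hB.mul_left t).neg.congr_fun ?_)
    · simpa [hg, qInt_mul_normHermite_one] using this
    · intro m
      simp only [hg, mehlerTerm]
      rw [qInt_mul_normHermite hq, show m + 1 + s = m + (s + 1) by ring]
      ring
  have hval : t * (y * mehlerSum q x y t s - t * mehlerSum q x y t (s + 1))
      = t * -(t * mehlerSum q x y t (s + 1)) + t * y * mehlerSum q x y t s := by ring
  rw [hval]
  exact ((h1.mul_left t).add (hA.mul_left (t * y))).congr_fun fun m => by
    simp only [hg, mehlerTerm]; ring

lemma mehlerSum_one {q x y t : ℝ} (hq : |q| < 1) (hx : x ∈ Sq q) (hy : y ∈ Sq q)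
    (ht : |t| < 1) :
    (1 - t ^ 2) * mehlerSum q x y t 1 = (x - t * y) * mehlerSum q x y t 0 := by
  have h0 := hasSum_mehlerSum hq hx hy ht 0
  have h1 := hasSum_mehlerSum hq hx hy ht 1
  have hD := (hasSum_mehler_aux hq hx hy ht 0).neg
  have h2 := (h1.sub (h0.mul_left x)).unique <|
    (hasSum_nat_add_iff (f := fun m => mehlerTerm q x y t 1 m - x * mehlerTerm q x y t 0 m) 1).mp
      (hD.congr_fun fun m => by
        simp only [mehlerTerm, add_zero, qHermite]
        ring)
  simp [mehlerTerm, qHermite, normHermite_zero] at h2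
  linear_combination h2

lemma mehlerSum_add_two {q x y t : ℝ} (hq : |q| < 1) (hx : x ∈ Sq q) (hy : y ∈ Sq q)
    (ht : |t| < 1) (s : ℕ) :
    (1 - t ^ 2 * q ^ (s + 1)) * mehlerSum q x y t (s + 2)
      = (x - t * y * q ^ (s + 1)) * mehlerSum q x y t (s + 1)
        - qInt q (s + 1) * mehlerSum q x y t s := by
  have h0 := hasSum_mehlerSum hq hx hy ht s
  have h1 := hasSum_mehlerSum hq hx hy ht (s + 1)
  have h2 := hasSum_mehlerSum hq hx hy ht (s + 2)
  have hD := hasSum_mehler_aux hq hx hy ht (s + 1)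
  have h3 := (hasSum_nat_add_iff
    (f := fun m => t ^ m * qHermite q (m + s) x * (qInt q m * normHermite q y m)) 1).mp
      (hD.congr_fun fun m => by rw [show m + 1 + s = m + (s + 1) by ring])
  simp only [range_one, sum_singleton, qInt_zero, zero_mul, mul_zero, add_zero] at h3
  have h4 := h2.unique <| (((h1.mul_left x).sub (h0.mul_left (qInt q (s + 1)))).sub
    (h3.mul_left (q ^ (s + 1)))).congr_fun fun m => by
      simp only [mehlerTerm]
      rw [show m + (s + 2) = (m + s) + 2 by ring, qHermite,
        show m + s + 1 = (s + 1) + m by ring, qInt_add, show m + (s + 1) = s + 1 + m by ring]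
      ring
  linear_combination h4

lemma mehlerSum_mul_qPoch {q x y t : ℝ} (hq : |q| < 1) (hx : x ∈ Sq q) (hy : y ∈ Sq q)
    (ht : |t| < 1) (s : ℕ) :
    mehlerSum q x y t s * qPoch (t ^ 2) q s = mehlerSum q x y t 0 * ASC q y t s x := by
  induction s using Nat.twoStepInduction with
  | zero => simp [qPoch, ASC]
  | one =>
    have := mehlerSum_one hq hx hy ht
    simp only [qPoch, ASC, range_one, prod_singleton, pow_zero]
    linear_combination this
  | more s ih1 ih2 =>
    have := mehlerSum_add_two hq hx hy ht s
    rw [ASC, show s + 2 = s + 1 + 1 from rfl, qPoch_succ]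
    have e := qPoch_succ (t ^ 2) q s
    linear_combination qPoch (t ^ 2) q (s + 1) * this + (x - t * y * q ^ (s + 1)) * ih2
      - (1 - t ^ 2 * q ^ s) * qInt q (s + 1) * ih1 - qInt q (s + 1) * mehlerSum q x y t s * e

lemma mehler_coeff_recurrence {q : ℝ} (hq : |q| < 1) (x y : ℝ) {c : ℕ → ℝ}
    (hc : ∀ n, c n = qHermite q n x * normHermite q y n) (n : ℕ) :
    (1 - q ^ (n + 4)) * c (n + 4) - (1 - q) * x * y * c (n + 3)
      + ((1 - q) * (x ^ 2 + y ^ 2) - 2 + (1 + q) * q ^ (n + 2)) * c (n + 2)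
      - (1 - q) * x * y * c (n + 1) + (1 - q ^ (n + 1)) * c n = 0 := by
  have p1 := (qInt_succ_pos hq n).ne'
  have p2 := (qInt_succ_pos hq (n + 1)).ne'
  have p3 := (qInt_succ_pos hq (n + 2)).ne'
  have p4 := (qInt_succ_pos hq (n + 3)).ne'
  have pf := (qFact_pos hq n).ne'
  have e : q ^ (n + 1) = 1 - (1 - q) * qInt q (n + 1) := by rw [one_sub_mul_qInt]; ring
  have e2 : q ^ (n + 2) = q * q ^ (n + 1) := by ring
  have e4 : q ^ (n + 4) = q ^ 3 * q ^ (n + 1) := by ring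
  have i2 := qInt_succ q (n + 1)
  have i3 := qInt_succ q (n + 2)
  have i4 := qInt_succ q (n + 3)
  simp only [hc, normHermite, qFact_succ, qHermite]
  rw [e4, e2, e]
  simp only [show n + 1 + 1 = n + 2 from rfl, show n + 2 + 1 = n + 3 from rfl,
    show n + 3 + 1 = n + 4 from rfl] at *
  field_simp
  rw [i4, i3, i2]
  ring

lemma mehlerSum_zero_functional {q x y t : ℝ} (hq : |q| < 1) (hx : x ∈ Sq q) (hy : y ∈ Sq q)
    (ht : |t| < 1) :
    mehlerSum q x y t 0 * Wk q x y t 0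
      = (1 - t ^ 2) * (1 - t ^ 2 * q) * mehlerSum q x y (q * t) 0 := by
  have hqt : |q * t| < 1 := by
    rw [abs_mul]; exact mul_lt_one_of_nonneg_of_lt_one_left (abs_nonneg q) hq ht.le
  set c : ℕ → ℝ := fun n => qHermite q n x * normHermite q y n with hc
  have hS : HasSum (fun n => c n * t ^ n) (mehlerSum q x y t 0) :=
    (hasSum_mehlerSum hq hx hy ht 0).congr_fun fun n => by simp only [hc, mehlerTerm, add_zero]; ring
  have hT : HasSum (fun n => q ^ n * (c n * t ^ n)) (mehlerSum q x y (q * t) 0) :=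
    (hasSum_mehlerSum hq hx hy hqt 0).congr_fun fun n => by
      simp only [hc, mehlerTerm, add_zero]; ring
  set S := mehlerSum q x y t 0
  set T := mehlerSum q x y (q * t) 0
  have shift : ∀ {f : ℕ → ℝ} {a : ℝ} (k : ℕ), HasSum f a →
      HasSum (fun n => f (n + k)) (a - ∑ i ∈ range k, f i) := fun k h =>
    (hasSum_nat_add_iff k).mpr (by simpa using h)
  have total := ((((((shift 4 (hS.sub hT)).sub ((shift 3 hS).mul_left ((1 - q) * x * y * t))).add
    ((shift 2 hS).mul_left (((1 - q) * (x ^ 2 + y ^ 2) - 2) * t ^ 2))).add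
    ((shift 2 hT).mul_left ((1 + q) * t ^ 2))).sub
    ((shift 1 hS).mul_left ((1 - q) * x * y * t ^ 3))).add
    (hS.mul_left (t ^ 4))).sub (hT.mul_left (q * t ^ 4))
  have zero := total.unique (hasSum_zero.congr_fun fun n => by
    linear_combination t ^ (n + 4) * mehler_coeff_recurrence hq x y (c := c) (fun _ => rfl) n)
  have i1 := qInt_one q
  have i2 : qInt q 2 = 1 + q := by rw [qInt_succ, qInt_one, mul_one]
  have i3 : qInt q 3 = 1 + q * (1 + q) := by rw [qInt_succ, i2]
  have n2 : 1 + q ≠ 0 := by linarith [(abs_lt.mp hq).1]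
  have n3 : 1 + q * (1 + q) ≠ 0 := by nlinarith [sq_nonneg (1 + 2 * q)]
  have c0 : c 0 = 1 := by simp [hc, qHermite, normHermite_zero]
  have c1 : c 1 = x * y := by simp [hc, qHermite, normHermite, qFact, i1]
  have c2 : c 2 * (1 + q) = (x ^ 2 - 1) * (y ^ 2 - 1) := by
    simp only [hc, qHermite, normHermite, qFact_succ, qFact_zero, zero_add, one_add_one_eq_two,
      i1, i2]
    field_simp
  have c3 : c 3 * ((1 + q) * (1 + q * (1 + q)))
      = (x * (x ^ 2 - 1) - (1 + q) * x) * (y * (y ^ 2 - 1) - (1 + q) * y) := by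
    simp only [hc, qHermite, normHermite, qFact_succ, qFact_zero, zero_add, one_add_one_eq_two,
      i1, i2, show 2 + 1 = 3 from rfl, i3]
    field_simp
  simp only [sum_range_succ, range_zero, sum_empty, c0, c1] at zero
  rw [Wk]
  simp only [mul_zero, pow_zero, mul_one]
  have r2 : (1 - q ^ 2) * c 2 - (1 - q) * x * y * (x * y)
      + ((1 - q) * (x ^ 2 + y ^ 2) - 2 + (1 + q)) = 0 := by
    linear_combination (1 - q) * c2
  have r3 : (1 - q ^ 3) * c 3 - (1 - q) * x * y * c 2
      + ((1 - q) * (x ^ 2 + y ^ 2) - 2 + (1 + q) * q) * (x * y) - (1 - q) * x * y = 0 := by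
    refine (mul_eq_zero.mp (?_ : (1 + q) * _ = 0)).resolve_left n2
    linear_combination (1 - q) * c3 - (1 - q) * x * y * c2
  linear_combination zero + t ^ 2 * r2 + t ^ 3 * r3

lemma Wk_eq_Wk_zero (q x y t : ℝ) (k : ℕ) : Wk q x y t k = Wk q x y (q ^ k * t) 0 := by
  simp only [Wk, pow_mul', mul_zero, pow_zero]
  ring

lemma mehlerSum_mul_prod_Wk {q x y t : ℝ} (hq : |q| < 1) (hx : x ∈ Sq q) (hy : y ∈ Sq q)
    (ht : |t| < 1) (N : ℕ) :
    mehlerSum q x y t 0 * ∏ k ∈ range N, Wk q x y t k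
      = (∏ i ∈ range (2 * N), (1 - t ^ 2 * q ^ i)) * mehlerSum q x y (q ^ N * t) 0 := by
  induction N with
  | zero => simp
  | succ N ih =>
    have hqt : |q ^ N * t| < 1 := by
      rw [abs_mul, abs_pow]
      exact mul_lt_one_of_nonneg_of_lt_one_right (pow_le_one₀ (abs_nonneg q) hq.le)
        (abs_nonneg t) ht
    have h := mehlerSum_zero_functional hq hx hy hqt
    rw [← Wk_eq_Wk_zero] at h
    rw [prod_range_succ, ← mul_assoc, ih, mul_add_one, prod_range_succ, prod_range_succ,
      pow_succ' q N, mul_assoc q]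
    rw [show q ^ (2 * N) = (q ^ N) ^ 2 by ring, show q ^ (2 * N + 1) = (q ^ N) ^ 2 * q by ring]
    linear_combination (∏ i ∈ range (2 * N), (1 - t ^ 2 * q ^ i)) * h

lemma tendsto_mehlerSum_zero {q x y t : ℝ} (hq : |q| < 1) (hx : x ∈ Sq q) (hy : y ∈ Sq q)
    (ht : |t| < 1) : Tendsto (fun N : ℕ => mehlerSum q x y (q ^ N * t) 0) atTop (𝓝 1) := by
  have h0 : Tendsto (fun N : ℕ => q ^ N * t) atTop (𝓝 0) := by
    simpa using (tendsto_pow_atTop_nhds_zero_of_abs_lt_one hq).mul_const t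
  have h1 : mehlerSum q x y 0 0 = 1 := by
    rw [mehlerSum, tsum_eq_single 0 (fun m hm => by simp [mehlerTerm, hm])]
    simp [mehlerTerm, qHermite, normHermite_zero]
  rw [← h1]
  refine tendsto_tsum_of_dominated_convergence (summable_abs_mehlerTerm hq hx hy ht 0)
    (fun m => ((h0.pow m).mul_const _).mul_const _) (Eventually.of_forall fun N m => ?_)
  simp only [mehlerTerm, Real.norm_eq_abs, abs_mul, abs_pow]
  gcongr
  exact mul_le_of_le_one_left (abs_nonneg t) (pow_le_one₀ (abs_nonneg q) hq.le)

/-- The Poisson–Mehler formula. -/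
lemma mehlerSum_zero_mul_tprod {q x y t : ℝ} (hq : |q| < 1) (hx : x ∈ Sq q) (hy : y ∈ Sq q)
    (ht : |t| < 1) :
    mehlerSum q x y t 0 * ∏' k, Wk q x y t k = qPochInf (t ^ 2) q := by
  have h1 := (multipliable_Wk hq x y t).tendsto_prod_tprod_nat.const_mul (mehlerSum q x y t 0)
  have h2 := ((multipliable_qPochInf hq (t ^ 2)).tendsto_prod_tprod_nat.comp
    (tendsto_id.const_mul_atTop' two_pos)).mul (tendsto_mehlerSum_zero hq hx hy ht)
  rw [mul_one] at h2
  exact tendsto_nhds_unique h1 (h2.congr fun N => (mehlerSum_mul_prod_Wk hq hx hy ht N).symm)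

lemma mehlerSum_eq {q x y t : ℝ} (hq : |q| < 1) (hx : x ∈ Sq q) (hy : y ∈ Sq q)
    (ht : |t| < 1) (s : ℕ) :
    mehlerSum q x y t s
      = qPochInf (t ^ 2) q / (∏' k, Wk q x y t k) * (ASC q y t s x / qPoch (t ^ 2) q s) := by
  have ht2 : |t ^ 2| < 1 := by rw [abs_pow]; exact pow_lt_one₀ (abs_nonneg t) ht two_ne_zero
  have h := mehlerSum_zero_mul_tprod hq hx hy ht
  have hW : ∏' k, Wk q x y t k ≠ 0 := fun h0 => qPochInf_ne_zero ht2 hq (by rw [← h, h0, mul_zero])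
  rw [← h, mul_div_cancel_right₀ _ hW, ← mul_div_assoc, ← mehlerSum_mul_qPoch hq hx hy ht,
    mul_div_cancel_right₀ _ (qPoch_ne_zero ht2 hq s)]

/-! ### The Kibble–Slepian expansion -/

/-- The general term of the triple series after the factor `H_{m+n}(x₃)` is delinearised,
grouped by the indices `(k, j)` and `(m, n)`. -/
def quadTerm (q a r₁ r₂ x₁ x₂ x₃ : ℝ) (p : (ℕ × ℕ) × (ℕ × ℕ)) : ℝ :=
  a ^ p.1.1 / qFact q p.1.1 * (invCoeff q p.1.2 * (r₁ * r₂) ^ p.1.2)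
    * (mehlerTerm q x₁ x₃ r₁ (p.1.1 + p.1.2) p.2.1 * mehlerTerm q x₂ x₃ r₂ (p.1.1 + p.1.2) p.2.2)

lemma abs_invCoeff_le {q : ℝ} (hq : |q| < 1) (j : ℕ) : |invCoeff q j| ≤ (qFact q j)⁻¹ := by
  have h := inv_pos.mpr (qFact_pos hq j)
  rw [invCoeff, div_eq_mul_inv, abs_mul, abs_mul, abs_pow, abs_pow, abs_neg, abs_one, one_pow,
    one_mul, abs_of_pos h]
  exact mul_le_of_le_one_left h.le (pow_le_one₀ (abs_nonneg q) hq.le)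

lemma summable_quadTerm {q a r₁ r₂ x₁ x₂ x₃ : ℝ} (hq : |q| < 1) (ha : |a| < 1) (hr₁ : |r₁| < 1)
    (hr₂ : |r₂| < 1) (hx₁ : x₁ ∈ Sq q) (hx₂ : x₂ ∈ Sq q) (hx₃ : x₃ ∈ Sq q) :
    Summable (quadTerm q a r₁ r₂ x₁ x₂ x₃) := by
  have h1 : 0 < 1 - q := by linarith [(abs_lt.mp hq).2]
  have hs0 : 0 < √(1 - q) := Real.sqrt_pos.mpr h1
  have hss : √(1 - q) ^ 2 = 1 - q := Real.sq_sqrt h1.le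
  have hc : |r₁ * r₂| < 1 := by
    rw [abs_mul]; exact mul_lt_one_of_nonneg_of_lt_one_left (abs_nonneg r₁) hr₁ hr₂.le
  obtain ⟨K, hK, hK3⟩ := exists_one_lt_mul_cube_lt
    (max_lt (max_lt ha hc) (max_lt hr₁ hr₂))
  have small : ∀ r, r ≤ max (max |a| |r₁ * r₂|) (max |r₁| |r₂|) → r * K ^ 3 < 1 := fun r h =>
    (mul_le_mul_of_nonneg_right h (by positivity)).trans_lt hK3
  have ga := small |a| (by simp)
  have gc := small |r₁ * r₂| (by simp)
  have g1 := small |r₁| (by simp)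
  have g2 := small |r₂| (by simp)
  obtain ⟨C, hC, hbC⟩ := exists_inv_qFact_le hq hK
  obtain ⟨D₁, hD₁, hb₁⟩ := exists_abs_qHermite_le hq hK hx₁
  obtain ⟨D₂, hD₂, hb₂⟩ := exists_abs_qHermite_le hq hK hx₂
  obtain ⟨E, hE, hbE⟩ := exists_abs_normHermite_le hq hK hx₃
  have geom := ((summable_geometric_of_lt_one (by positivity) ga).mul_of_nonneg
      (summable_geometric_of_lt_one (by positivity) gc)
      (fun _ => by positivity) (fun _ => by positivity)).mul_of_nonneg
    ((summable_geometric_of_lt_one (by positivity) g1).mul_of_nonneg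
      (summable_geometric_of_lt_one (by positivity) g2)
      (fun _ => by positivity) (fun _ => by positivity))
    (fun _ => by positivity) (fun _ => by positivity)
  refine Summable.of_norm_bounded (geom.mul_left (C * C * D₁ * D₂ * E * E)) ?_
  rintro ⟨⟨k, j⟩, m, n⟩
  simp only [quadTerm, mehlerTerm, Real.norm_eq_abs, abs_mul, abs_pow, div_eq_mul_inv]
  rw [abs_of_pos (inv_pos.mpr (qFact_pos hq k))]
  set s := √(1 - q)
  rw [← hss] at hbC
  calc _ ≤ |a| ^ k * (C * (K * s ^ 2) ^ k) * (C * (K * s ^ 2) ^ j * (|r₁| * |r₂|) ^ j)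
        * (|r₁| ^ m * (D₁ * (K / s) ^ (m + (k + j))) * (E * (K ^ 2 * s) ^ m)
          * (|r₂| ^ n * (D₂ * (K / s) ^ (n + (k + j))) * (E * (K ^ 2 * s) ^ n))) := by
        gcongr
        · exact hbC k
        · exact (abs_invCoeff_le hq j).trans (hbC j)
        · exact hb₁ _
        · exact hbE _
        · exact hb₂ _
        · exact hbE _
    _ = C * C * D₁ * D₂ * E * E * ((|a| * (K * s ^ 2 * (K / s) * (K / s))) ^ k
          * (|r₁| * |r₂| * (K * s ^ 2 * (K / s) * (K / s))) ^ j
          * ((|r₁| * (K / s * (K ^ 2 * s))) ^ m * (|r₂| * (K / s * (K ^ 2 * s))) ^ n)) := by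
        simp only [mul_pow, pow_add]
        ring
    _ = _ := by
        rw [show K * s ^ 2 * (K / s) * (K / s) = K ^ 3 by field_simp,
          show K / s * (K ^ 2 * s) = K ^ 3 by field_simp]

lemma hasSum_quadTerm_fiber {q a r₁ r₂ x₁ x₂ x₃ : ℝ} (hq : |q| < 1) (hr₁ : |r₁| < 1)
    (hr₂ : |r₂| < 1) (hx₁ : x₁ ∈ Sq q) (hx₂ : x₂ ∈ Sq q) (hx₃ : x₃ ∈ Sq q) (p : ℕ × ℕ) :
    HasSum (fun mn => quadTerm q a r₁ r₂ x₁ x₂ x₃ (p, mn))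
      (a ^ p.1 / qFact q p.1 * (invCoeff q p.2 * (r₁ * r₂) ^ p.2)
        * (mehlerSum q x₁ x₃ r₁ (p.1 + p.2) * mehlerSum q x₂ x₃ r₂ (p.1 + p.2))) :=
  ((hasSum_mehlerSum hq hx₁ hx₃ hr₁ _).mul (hasSum_mehlerSum hq hx₂ hx₃ hr₂ _)
    (summable_mul_of_summable_norm (summable_abs_mehlerTerm hq hx₁ hx₃ hr₁ _)
      (summable_abs_mehlerTerm hq hx₂ hx₃ hr₂ _))).mul_left _

lemma hasSum_antidiagonal {f : ℕ × ℕ → ℝ} {S : ℝ} (hf : HasSum f S) :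
    HasSum (fun s => ∑ p ∈ antidiagonal s, f p) S :=
  ((HasAntidiagonal.sigmaAntidiagonalEquivProd (A := ℕ)).hasSum_iff.mpr hf).sigma fun s => by
    simpa [HasAntidiagonal.sigmaAntidiagonalEquivProd, Finset.sum_attach] using
      hasSum_fintype (fun p : antidiagonal s => f p)

lemma hasSum_mehlerSum_expansion {q a r₁ r₂ x₁ x₂ x₃ S : ℝ} (hq : |q| < 1) (hr₁ : |r₁| < 1)
    (hr₂ : |r₂| < 1) (hx₁ : x₁ ∈ Sq q) (hx₂ : x₂ ∈ Sq q) (hx₃ : x₃ ∈ Sq q)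
    (hS : HasSum (quadTerm q a r₁ r₂ x₁ x₂ x₃) S) :
    HasSum (fun s => (∏ i ∈ range s, (a - r₁ * r₂ * q ^ i)) / qFact q s
      * (mehlerSum q x₁ x₃ r₁ s * mehlerSum q x₂ x₃ r₂ s)) S := by
  refine (hasSum_antidiagonal
    (hS.prod_fiberwise (hasSum_quadTerm_fiber hq hr₁ hr₂ hx₁ hx₂ hx₃))).congr_fun fun s => ?_
  rw [← sum_antidiagonal_invCoeff hq, mul_div_cancel_left₀ _ (qFact_pos hq s).ne', Finset.sum_mul]
  exact Finset.sum_congr rfl fun p hp => by rw [mem_antidiagonal.mp hp]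

lemma hasSum_tripleTerm {q a r₁ r₂ x₁ x₂ x₃ S : ℝ} (hq : |q| < 1)
    (hS : HasSum (quadTerm q a r₁ r₂ x₁ x₂ x₃) S) :
    HasSum (tripleTerm q a r₁ r₂ x₁ x₂ x₃) S := by
  set V : (ℕ × ℕ × ℕ) × ℕ → ℝ := fun p =>
    a ^ p.1.1 * r₁ ^ p.1.2.1 * r₂ ^ p.1.2.2 / qFact q p.1.1 * qHermite q (p.1.1 + p.1.2.1) x₁
      * qHermite q (p.1.1 + p.1.2.2) x₂
      * (invCoeff q p.2 * shiftHermite q x₃ p.1.2.1 p.2 * shiftHermite q x₃ p.1.2.2 p.2) with hV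
  set ι : (ℕ × ℕ) × (ℕ × ℕ) → (ℕ × ℕ × ℕ) × ℕ := fun p =>
    ((p.1.1, p.2.1 + p.1.2, p.2.2 + p.1.2), p.1.2) with hι
  have hinj : Function.Injective ι := by
    rintro ⟨⟨k, j⟩, m, n⟩ ⟨⟨k', j'⟩, m', n'⟩ h
    simp only [hι, Prod.mk.injEq] at h ⊢
    omega
  have hsupp : ∀ p ∉ Set.range ι, V p = 0 := by
    rintro ⟨⟨k, m, n⟩, j⟩ hp
    rcases lt_or_ge m j with hm | hm
    · simp [hV, shiftHermite_of_lt q x₃ hm]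
    rcases lt_or_ge n j with hn | hn
    · simp [hV, shiftHermite_of_lt q x₃ hn]
    exact absurd ⟨((k, j), (m - j, n - j)), by simp [hι, hm, hn]⟩ hp
  have hVS : HasSum V S := by
    refine (hinj.hasSum_iff hsupp).mp (hS.congr_fun ?_)
    rintro ⟨⟨k, j⟩, m, n⟩
    simp only [hV, hι, Function.comp, quadTerm, mehlerTerm, shiftHermite_add]
    rw [show k + (m + j) = m + (k + j) by ring, show k + (n + j) = n + (k + j) by ring]
    ring
  refine hVS.prod_fiberwise ?_
  rintro ⟨k, m, n⟩
  have hfin : HasSum (fun j => invCoeff q j * shiftHermite q x₃ m j * shiftHermite q x₃ n j)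
      (delinSum q x₃ (m + n + 1 + 1) m n) :=
    hasSum_sum_of_ne_finset_zero fun j hj => by
      rw [shiftHermite_of_lt q x₃ (show n < j by simp at hj; omega), mul_zero]
  have e : tripleTerm q a r₁ r₂ x₁ x₂ x₃ (k, m, n)
      = a ^ k * r₁ ^ m * r₂ ^ n / qFact q k * qHermite q (k + m) x₁ * qHermite q (k + n) x₂
        * delinSum q x₃ (m + n + 1 + 1) m n := by
    have h1 := (qFact_pos hq k).ne'
    have h2 := (qFact_pos hq m).ne'
    have h3 := (qFact_pos hq n).ne'
    simp only [tripleTerm]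
    rw [qHermite_add hq x₃ (Nat.lt_succ_self (m + n))]
    field_simp
  rw [e]
  exact hfin.mul_left _

/-- second expansion of the generalized Kibble–Slepian sum `g`,
in Al-Salam–Chihara polynomials. -/
theorem KS_expansion_two (q ρ₁₂ ρ₁₃ ρ₂₃ : ℝ) (hq : |q| < 1)
    (h12 : 0 < |ρ₁₂|) (h12' : |ρ₁₂| < 1) (h13 : 0 < |ρ₁₃|) (h13' : |ρ₁₃| < 1)
    (h23 : 0 < |ρ₂₃|) (h23' : |ρ₂₃| < 1)
    (hconv : ∀ x₁ ∈ Sq q, ∀ x₂ ∈ Sq q, ∀ x₃ ∈ Sq q,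
      Summable (tripleTerm q ρ₁₂ ρ₁₃ ρ₂₃ x₁ x₂ x₃))
    (x₁ x₂ x₃ : ℝ) (hx₁ : x₁ ∈ Sq q) (hx₂ : x₂ ∈ Sq q) (hx₃ : x₃ ∈ Sq q) :
    (∑' p : ℕ × ℕ × ℕ, tripleTerm q ρ₁₂ ρ₁₃ ρ₂₃ x₁ x₂ x₃ p) =
      qPochInf (ρ₁₃ ^ 2) q * qPochInf (ρ₂₃ ^ 2) q /
          (∏' k : ℕ, Wk q x₁ x₃ ρ₁₃ k * Wk q x₃ x₂ ρ₂₃ k) *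
        ∑' s : ℕ, ρ₁₂ ^ s * qPoch (ρ₁₃ * ρ₂₃ / ρ₁₂) q s /
            (qFact q s * qPoch (ρ₁₃ ^ 2) q s * qPoch (ρ₂₃ ^ 2) q s) *
          ASC q x₃ ρ₁₃ s x₁ * ASC q x₃ ρ₂₃ s x₂ := by
  obtain ⟨S, hS⟩ := summable_quadTerm hq h12' h13' h23' hx₁ hx₂ hx₃
  have hexp := hasSum_mehlerSum_expansion hq h13' h23' hx₁ hx₂ hx₃ hS
  have hW : ∀ k, Wk q x₃ x₂ ρ₂₃ k = Wk q x₂ x₃ ρ₂₃ k := fun k => by simp only [Wk]; ring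
  have hprod : ∏' k : ℕ, Wk q x₁ x₃ ρ₁₃ k * Wk q x₃ x₂ ρ₂₃ k
      = (∏' k, Wk q x₁ x₃ ρ₁₃ k) * ∏' k, Wk q x₂ x₃ ρ₂₃ k := by
    simp only [hW]
    exact (multipliable_Wk hq x₁ x₃ ρ₁₃).tprod_mul (multipliable_Wk hq x₂ x₃ ρ₂₃)
  rw [(hasSum_tripleTerm hq hS).tsum_eq, hprod, ← hexp.tsum_eq, ← tsum_mul_left]
  refine tsum_congr fun s => ?_
  have hnum : ρ₁₂ ^ s * qPoch (ρ₁₃ * ρ₂₃ / ρ₁₂) q s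
      = ∏ i ∈ range s, (ρ₁₂ - ρ₁₃ * ρ₂₃ * q ^ i) := by
    have h0 : ρ₁₂ ≠ 0 := abs_pos.mp h12
    conv_lhs => rw [← card_range s, ← prod_const, card_range, qPoch, ← prod_mul_distrib]
    exact prod_congr rfl fun i _ => by field_simp
  rw [mehlerSum_eq hq hx₁ hx₃ h13', mehlerSum_eq hq hx₂ hx₃ h23', hnum]
  simp only [div_eq_mul_inv, mul_inv]
  ring
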